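/- arXiv:2602.14550 — 5 statements merged into one kernel-verified Lean document; each statement's English description precedes it below -/
import Mathlib

section
/- Let V be a finite set with at least two elements, w : V × V → ℝ≥0 a symmetric weight function with w(v,v) = 0, s ∈ V a designated source, and h : V∖{s} → ℕ an injective ordering. Then there exists exactly one nonempty subset S ⊆ V∖{s} that lexicographically minimizes the tuple (cut(S), LN(S), |S|) over all nonempty subsets of V∖{s}; moreover, this unique set S is a minimum cut of the weighted graph (V,w). -/
/-!
Existence holds because a finite family of sets has a minimizer for a linear (lexicographic) order.

For uniqueness, let `A` and `B` both be minimizers. They have the same lexicographic number, and as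
`h` is injective away from `s`, it is attained at the same vertex `x`, so `x ∈ A ∩ B`. Cut values
are submodular (`cutVal_inter_add_cutVal_union_le`) and both `A ∩ B` and `A ∪ B` compete in the
minimization, so `A ∩ B` has the minimal cut value too. Its lexicographic number is at most `h x`,
so minimality of `A` in the third coordinate forces `|A| ≤ |A ∩ B|`, hence `A ⊆ B`; symmetrically
`B ⊆ A`.

A minimizer is a minimum cut since cut values are invariant under complement
(`cutVal_compl`), so any competing set may be assumed to avoid `s`.
-/

open Finset

/-- The cut value of a set `S`: total weight of edges with exactly one endpoint in `S`. -/
noncomputable def cutVal {V : Type*} [Fintype V] [DecidableEq V]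
    (w : V → V → NNReal) (S : Finset V) : NNReal :=
  ∑ u ∈ S, ∑ v ∈ Sᶜ, w u v

/-- The lexicographic number of a set `S`: the minimum of `h` over `S`. -/
noncomputable def LN {α : Type*} (h : α → ℕ) (S : Finset α) : ℕ :=
  sInf (h '' (S : Set α))

/-- Lexicographic `≤` on triples `(cut value, lexicographic number, priority)`. -/
def Lex3Le (a b : NNReal × ℕ × ℕ) : Prop :=
  a.1 < b.1 ∨ (a.1 = b.1 ∧ (a.2.1 < b.2.1 ∨ (a.2.1 = b.2.1 ∧ a.2.2 ≤ b.2.2)))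

theorem cutVal_eq_sum_ite {V : Type*} [Fintype V] [DecidableEq V]
    (w : V → V → NNReal) (S : Finset V) :
    cutVal w S = ∑ u, ∑ v, if u ∈ S ∧ v ∉ S then w u v else 0 := by
  unfold cutVal
  rw [← Finset.sum_filter_add_sum_filter_not Finset.univ (fun u => u ∈ S)
    (fun u => ∑ v, if u ∈ S ∧ v ∉ S then w u v else 0)]
  have h2 : ∑ u ∈ Finset.univ.filter (fun u => ¬ u ∈ S),
      ∑ v, (if u ∈ S ∧ v ∉ S then w u v else 0) = 0 := by
    refine Finset.sum_eq_zero fun u hu => Finset.sum_eq_zero fun v _ => ?_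
    simp at hu
    simp [hu]
  rw [h2, add_zero]
  refine Finset.sum_congr (by ext; simp) fun u hu => ?_
  rw [← Finset.sum_filter]
  refine Finset.sum_congr ?_ fun _ _ => rfl
  ext v
  simp [(Finset.mem_filter.1 hu).2]

/-- Submodularity of cut values. It holds term by term over ordered pairs of vertices, so the
symmetry of `w` plays no role. -/
theorem cutVal_inter_add_cutVal_union_le {V : Type*} [Fintype V] [DecidableEq V]
    (w : V → V → NNReal) (A B : Finset V) :
    cutVal w (A ∩ B) + cutVal w (A ∪ B) ≤ cutVal w A + cutVal w B := by
  simp only [cutVal_eq_sum_ite, ← Finset.sum_add_distrib]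
  refine Finset.sum_le_sum fun u _ => Finset.sum_le_sum fun v _ => ?_
  by_cases h1 : u ∈ A <;> by_cases h2 : u ∈ B <;> by_cases h3 : v ∈ A <;> by_cases h4 : v ∈ B <;>
    simp [h1, h2, h3, h4]

theorem cutVal_compl {V : Type*} [Fintype V] [DecidableEq V]
    (w : V → V → NNReal) (hsymm : ∀ u v, w u v = w v u) (S : Finset V) :
    cutVal w Sᶜ = cutVal w S := by
  unfold cutVal
  rw [compl_compl, Finset.sum_comm]
  exact Finset.sum_congr rfl fun u _ => Finset.sum_congr rfl fun v _ => hsymm v u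

theorem exists_mem_eq_LN {α : Type*} (h : α → ℕ) {S : Finset α} (hS : S.Nonempty) :
    ∃ x ∈ S, h x = LN h S := by
  have hne : (h '' (S : Set α)).Nonempty := Set.Nonempty.image h hS
  exact Nat.sInf_mem hne

theorem LN_le {α : Type*} (h : α → ℕ) {S : Finset α} {x : α} (hx : x ∈ S) : LN h S ≤ h x :=
  Nat.sInf_le (Set.mem_image_of_mem h hx)

theorem fst_le_of_Lex3Le {a b : NNReal × ℕ × ℕ} (hab : Lex3Le a b) : a.1 ≤ b.1 := by
  rcases hab with hlt | ⟨heq, _⟩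
  exacts [hlt.le, heq.le]

theorem Lex3Le_antisymm {a b : NNReal × ℕ × ℕ} (hab : Lex3Le a b) (hba : Lex3Le b a) :
    a = b := by
  have h1 : a.1 = b.1 := le_antisymm (fst_le_of_Lex3Le hab) (fst_le_of_Lex3Le hba)
  simp only [Lex3Le, h1, lt_irrefl, false_or, true_and] at hab hba
  refine Prod.ext h1 (Prod.ext ?_ ?_) <;> omega

theorem Lex3Le_of_toLex_le {a b : NNReal × ℕ × ℕ}
    (hab : toLex (a.1, toLex a.2) ≤ toLex (b.1, toLex b.2)) : Lex3Le a b := by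
  simpa [Prod.Lex.toLex_le_toLex, Lex3Le] using hab

/-- One half of uniqueness: minimality of `A` in all three coordinates gives `A ⊆ B` whenever `B`
ties with `A` in the first two. -/
theorem subset_of_Lex3Le {V : Type*} [Fintype V] [DecidableEq V]
    (w : V → V → NNReal) (s : V) (h : V → ℕ)
    (hinj : ∀ a b, a ≠ s → b ≠ s → h a = h b → a = b) {A B : Finset V}
    (hA : A.Nonempty) (hsA : s ∉ A) (hB : B.Nonempty) (hsB : s ∉ B)
    (hmin : ∀ T : Finset V, T.Nonempty → s ∉ T →
      Lex3Le (cutVal w A, LN h A, A.card) (cutVal w T, LN h T, T.card))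
    (hcut : cutVal w A = cutVal w B) (hLN : LN h A = LN h B) : A ⊆ B := by
  obtain ⟨x, hxA, hx⟩ := exists_mem_eq_LN h hA
  obtain ⟨y, hyB, hy⟩ := exists_mem_eq_LN h hB
  have hxy : x = y := hinj x y (ne_of_mem_of_not_mem hxA hsA) (ne_of_mem_of_not_mem hyB hsB)
    (by rw [hx, hy, hLN])
  subst hxy
  have hxI : x ∈ A ∩ B := Finset.mem_inter.2 ⟨hxA, hyB⟩
  have hI := hmin (A ∩ B) ⟨x, hxI⟩ (fun hs => hsA (Finset.mem_inter.1 hs).1)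
  have hU := fst_le_of_Lex3Le (hmin (A ∪ B) ⟨x, Finset.mem_union_left _ hxA⟩ (by simp [hsA, hsB]))
  have hle : cutVal w (A ∩ B) ≤ cutVal w A := by
    have hsub := cutVal_inter_add_cutVal_union_le w A B
    rw [← hcut] at hsub
    exact le_of_add_le_add_right (hsub.trans' (add_le_add_right hU _))
  have hLI : LN h (A ∩ B) ≤ LN h A := hx ▸ LN_le h hxI
  have hcard : A.card ≤ (A ∩ B).card := by
    rcases hI with hlt | ⟨_, hlt | ⟨_, hc⟩⟩
    · exact absurd hlt hle.not_gt
    · exact absurd hlt hLI.not_gt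
    · exact hc
  exact Finset.inter_eq_left.1 (Finset.eq_of_subset_of_card_le Finset.inter_subset_left hcard)

/-- There is a unique nonempty `S ⊆ V \ {s}` lexicographically minimizing
`(cut(S), LN(S), |S|)`, and it is a minimum cut. -/
theorem stmt0 {V : Type*} [Fintype V] [DecidableEq V]
    (hV : 2 ≤ Fintype.card V)
    (w : V → V → NNReal) (hsymm : ∀ u v, w u v = w v u) (hdiag : ∀ v, w v v = 0)
    (s : V) (h : V → ℕ) (hinj : ∀ a b, a ≠ s → b ≠ s → h a = h b → a = b) :
    (∃! S : Finset V, S.Nonempty ∧ s ∉ S ∧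
      ∀ T : Finset V, T.Nonempty → s ∉ T →
        Lex3Le (cutVal w S, LN h S, S.card) (cutVal w T, LN h T, T.card)) ∧
    (∀ S : Finset V,
      (S.Nonempty ∧ s ∉ S ∧
        ∀ T : Finset V, T.Nonempty → s ∉ T →
          Lex3Le (cutVal w S, LN h S, S.card) (cutVal w T, LN h T, T.card)) →
      S.Nonempty ∧ S ≠ Finset.univ ∧
        ∀ T : Finset V, T.Nonempty → T ≠ Finset.univ → cutVal w S ≤ cutVal w T) := by
  refine ⟨?_, ?_⟩
  · obtain ⟨v, hv⟩ : ∃ v, v ≠ s := Fintype.exists_ne_of_one_lt_card hV s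
    obtain ⟨S, hS, hmin⟩ := Finset.exists_min_image
      ((Finset.univ : Finset (Finset V)).filter fun S => S.Nonempty ∧ s ∉ S)
      (fun S => toLex (cutVal w S, toLex (LN h S, S.card)))
      ⟨{v}, by simp [hv.symm]⟩
    simp only [Finset.mem_filter, Finset.mem_univ, true_and] at hS hmin
    have hS' : ∀ T : Finset V, T.Nonempty → s ∉ T →
        Lex3Le (cutVal w S, LN h S, S.card) (cutVal w T, LN h T, T.card) :=
      fun T hT hsT => Lex3Le_of_toLex_le (a := (_, _, _)) (b := (_, _, _)) (hmin T ⟨hT, hsT⟩)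
    refine ⟨S, ⟨hS.1, hS.2, hS'⟩, ?_⟩
    rintro B ⟨hB, hsB, hB'⟩
    have heq := Lex3Le_antisymm (hS' B hB hsB) (hB' S hS.1 hS.2)
    simp only [Prod.mk.injEq] at heq
    obtain ⟨hc, hl, -⟩ := heq
    exact Finset.Subset.antisymm
      (subset_of_Lex3Le w s h hinj hB hsB hS.1 hS.2 hB' hc.symm hl.symm)
      (subset_of_Lex3Le w s h hinj hS.1 hS.2 hB hsB hS' hc hl)
  · rintro S ⟨hS, hsS, hmin⟩
    refine ⟨hS, fun hu => hsS (hu ▸ Finset.mem_univ s), fun T hT hTu => ?_⟩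
    by_cases hsT : s ∈ T
    · rw [← cutVal_compl w hsymm T]
      refine fst_le_of_Lex3Le (hmin Tᶜ ?_ (by simpa using hsT))
      rwa [Finset.nonempty_iff_ne_empty, Ne, Finset.compl_eq_empty_iff]
    · exact fst_le_of_Lex3Le (hmin T hT hsT)
end

section
/- Let V be a finite set with at least two elements, w : V × V → ℝ≥0 a symmetric weight function with w(v,v) = 0, s ∈ V, and let λ denote the minimum cut value of (V,w). If S₁ and S₂ are minimum cuts (cut(S₁) = cut(S₂) = λ) with s ∉ S₁ ∪ S₂ and S₁ ∩ S₂ ≠ ∅, then S₁ ∩ S₂ and S₁ ∪ S₂ are also minimum cuts, i.e., cut(S₁ ∩ S₂) = cut(S₁ ∪ S₂) = λ. -/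
/-!
The cut function is submodular (`cutVal_inter_add_cutVal_union_le`), so the cut values of `S₁ ∩ S₂`
and `S₁ ∪ S₂` add up to at most `2 * lam`. Both sets are nonempty and miss `s`, hence each has cut
value at least `lam`, and equality must hold in both.
-/

open Finset

/-- If `S₁, S₂` are minimum cuts avoiding `s` with nonempty intersection, then
`S₁ ∩ S₂` and `S₁ ∪ S₂` are also minimum cuts. -/
theorem stmt2 {V : Type*} [Fintype V] [DecidableEq V]
    (hV : 2 ≤ Fintype.card V)
    (w : V → V → NNReal) (hsymm : ∀ u v, w u v = w v u) (hdiag : ∀ v, w v v = 0)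
    (s : V) (lam : NNReal)
    (hlam : ∀ T : Finset V, T.Nonempty → T ≠ Finset.univ → lam ≤ cutVal w T)
    (S₁ S₂ : Finset V) (h1ne : S₁.Nonempty) (h2ne : S₂.Nonempty)
    (hs : s ∉ S₁ ∪ S₂) (hint : (S₁ ∩ S₂).Nonempty)
    (h1 : cutVal w S₁ = lam) (h2 : cutVal w S₂ = lam) :
    cutVal w (S₁ ∩ S₂) = lam ∧ cutVal w (S₁ ∪ S₂) = lam := by
  have hsub := cutVal_inter_add_cutVal_union_le w S₁ S₂
  rw [h1, h2] at hsub
  have hI : lam ≤ cutVal w (S₁ ∩ S₂) := hlam _ hint fun h =>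
    hs (Finset.mem_union_left _ (Finset.mem_inter.1 (h ▸ Finset.mem_univ s)).1)
  have hU : lam ≤ cutVal w (S₁ ∪ S₂) := hlam _ (h1ne.mono Finset.subset_union_left) fun h =>
    hs (h ▸ Finset.mem_univ s)
  constructor
  · exact le_antisymm (le_of_add_le_add_right ((add_le_add_right hU _).trans hsub)) hI
  · exact le_antisymm (le_of_add_le_add_left ((add_le_add_left hI _).trans hsub)) hU
end

section
/- Let T be a spanning tree of a connected graph on a finite vertex set V, rooted at s ∈ V. Let S be a nonempty subset of V with s ∉ S, and suppose exactly one edge of T crosses S. Let a be the lower endpoint of that edge. Then a ∈ S and S = a↓. -/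
/-!
Since `ab` is the only tree edge crossing `S`, a walk avoiding `a` or avoiding `b` never
enters or leaves `S` (`mem_iff_of_walk_avoids`). The path from `b` to `s` avoids `a`, so `b` lies
outside `S` with `s`, and hence `a ∈ S`. A path from a point of `S` to `s` must leave `S`, so it
meets `a`. Conversely, if the path from `x` to `s` meets `a`, then it meets `b` only after `a`, so
its initial part from `x` to `a` avoids `b` and `x` lies in `S` together with `a`. Both statements
about the order of `a` and `b` use that the two parts of a path cut at a vertex share only that
vertex (`eq_of_mem_takeUntil_of_mem_dropUntil`).
-/

/-- The descendant set `v↓` of `v` in the tree `T` rooted at `s`: the set of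
vertices `x` such that `v` lies on the unique path in `T` from `x` to `s`. -/
def descSet {V : Type*} (T : SimpleGraph V) (s v : V) : Set V :=
  {x | ∀ p : T.Walk x s, p.IsPath → v ∈ p.support}

/-- If every edge with exactly one end in `S` contains the vertex `v`, then a walk avoiding `v`
stays on one side of `S`. -/
lemma mem_iff_of_walk_avoids {V : Type*} {T : SimpleGraph V} {S : Set V} {v : V}
    (h : ∀ c d : V, T.Adj c d → Xor (c ∈ S) (d ∈ S) → c = v ∨ d = v)
    {x y : V} (p : T.Walk x y) (hv : v ∉ p.support) : x ∈ S ↔ y ∈ S := by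
  induction p with
  | nil => rfl
  | @cons x w y hxw p ih =>
    simp only [SimpleGraph.Walk.support_cons, List.mem_cons, not_or] at hv
    have hw : w ≠ v := fun e => hv.2 (e ▸ p.start_mem_support)
    have hx := h x w hxw
    have hi := ih hv.2
    have hvx := hv.1
    unfold Xor at hx
    grind

lemma eq_of_mem_takeUntil_of_mem_dropUntil {V : Type*} [DecidableEq V] {T : SimpleGraph V}
    {x y u w : V} {p : T.Walk x y} (hp : p.IsPath) (hu : u ∈ p.support)
    (h₁ : w ∈ (p.takeUntil u hu).support) (h₂ : w ∈ (p.dropUntil u hu).support) : w = u := by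
  by_contra hne
  have hn := hp.support_nodup
  rw [← p.take_spec hu, SimpleGraph.Walk.support_append, List.nodup_append] at hn
  rw [SimpleGraph.Walk.mem_support_iff] at h₂
  exact hn.2.2 w h₁ w (h₂.resolve_left hne) rfl

/-- If exactly one edge of the spanning tree `T` crosses the nonempty set `S`
(with `s ∉ S`), and `a` is the lower endpoint of that edge (its path to `s`
passes through the other endpoint `b`), then `a ∈ S` and `S = a↓`. -/
theorem stmt6 {V : Type*} [Fintype V] (T : SimpleGraph V) (hT : T.IsTree) (s : V)
    (S : Set V) (hne : S.Nonempty) (hs : s ∉ S)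
    (a b : V) (hadj : T.Adj a b) (hlow : a ∈ descSet T s b)
    (hcross : Xor' (a ∈ S) (b ∈ S))
    (huniq : ∀ c d : V, T.Adj c d → Xor' (c ∈ S) (d ∈ S) →
      (c = a ∧ d = b) ∨ (c = b ∧ d = a)) :
    a ∈ S ∧ S = descSet T s a := by
  classical
  have ha : ∀ c d : V, T.Adj c d → Xor' (c ∈ S) (d ∈ S) → c = a ∨ d = a := fun c d h hx =>
    (huniq c d h hx).imp And.left And.right
  have hb : ∀ c d : V, T.Adj c d → Xor' (c ∈ S) (d ∈ S) → c = b ∨ d = b := fun c d h hx =>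
    (huniq c d h hx).symm.imp And.left And.right
  have haS : a ∈ S := by
    obtain ⟨p, hp, -⟩ := hT.existsUnique_path a s
    have hbp := hlow p hp
    have hbs : b ∈ S ↔ s ∈ S := mem_iff_of_walk_avoids ha (p.dropUntil b hbp) fun h =>
      hadj.ne (eq_of_mem_takeUntil_of_mem_dropUntil hp hbp
        (SimpleGraph.Walk.start_mem_support _) h)
    rcases hcross with h | h
    · exact h.1
    · exact absurd (hbs.1 h.1) hs
  refine ⟨haS, Set.Subset.antisymm (fun x hx p _ => ?_) fun x hx => ?_⟩
  · by_contra hap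
    exact hs ((mem_iff_of_walk_avoids ha p hap).1 hx)
  · obtain ⟨p, hp, -⟩ := hT.existsUnique_path x s
    have hap := hx p hp
    have hbd := hlow _ (hp.dropUntil hap)
    exact (mem_iff_of_walk_avoids hb (p.takeUntil a hap) fun h =>
      hadj.ne (eq_of_mem_takeUntil_of_mem_dropUntil hp hap h hbd).symm).2 haS
end

section
/- Let T be a spanning tree of a connected graph on a finite vertex set V, rooted at s ∈ V. Let S be a nonempty subset of V with s ∉ S, and suppose exactly two edges of T cross S, with lower endpoints u and v respectively, where u ≠ v and v ∈ u↓. Then S = u↓ ∖ v↓. -/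
/-- Moving from a vertex to one of its ancestors shrinks the path to the root to a suffix. -/
lemma descSet_trans {V : Type*} {T : SimpleGraph V} {s u v x : V}
    (hv : v ∈ descSet T s u) (hx : x ∈ descSet T s v) : x ∈ descSet T s u := by
  classical
  intro p hp
  have h := hx p hp
  exact p.support_dropUntil_subset_support h (hv _ (hp.dropUntil h))

lemma descSet_antisymm {V : Type*} {T : SimpleGraph V} (hT : T.IsTree) {s a b : V}
    (hab : a ∈ descSet T s b) (hba : b ∈ descSet T s a) : a = b := by
  classical
  obtain ⟨p, hp, huniq⟩ := hT.existsUnique_path a s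
  have hb := hab p hp
  have ha := hba _ (hp.dropUntil hb)
  have hr := huniq _ ((hp.dropUntil hb).dropUntil ha)
  have h1 := congrArg SimpleGraph.Walk.length (p.take_spec hb)
  have h2 := congrArg SimpleGraph.Walk.length ((p.dropUntil b hb).take_spec ha)
  rw [SimpleGraph.Walk.length_append] at h1 h2
  rw [hr] at h2
  exact SimpleGraph.Walk.eq_of_length_eq_zero (p := p.takeUntil b hb) (by omega)

/-- The only edge leaving `w↓` is the one from `w` to its parent. -/
lemma eq_of_mem_of_notMem_descSet {V : Type*} {T : SimpleGraph V} (hT : T.IsTree)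
    {s w pw c d : V} (hadj : T.Adj w pw) (hlow : w ∈ descSet T s pw) (hcd : T.Adj c d)
    (hc : c ∈ descSet T s w) (hd : d ∉ descSet T s w) : c = w ∧ d = pw := by
  classical
  simp only [descSet, Set.mem_ofPred_eq, not_forall] at hd
  obtain ⟨p, hp, hw⟩ := hd
  have hcp : c ∉ p.support := fun h =>
    hw (p.support_dropUntil_subset_support h (hc _ (hp.dropUntil h)))
  have hq : (SimpleGraph.Walk.cons hcd p).IsPath := hp.cons hcp
  have hcw : w = c := by
    have := hc _ hq
    simpa [hw] using this
  subst hcw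
  refine ⟨rfl, ?_⟩
  have hpw : pw ∈ p.support := by
    have := hlow _ hq
    simpa [hadj.ne'] using this
  -- The initial segment from `w` to `pw` must be the single edge `w pw`, so its second vertex
  -- `d` is `pw`.
  have h1 : (SimpleGraph.Walk.cons hcd (p.takeUntil pw hpw)).IsPath :=
    (hp.takeUntil hpw).cons fun h => hcp (p.support_takeUntil_subset_support hpw h)
  have h2 : (SimpleGraph.Walk.cons hadj .nil).IsPath := by
    simp [hadj.ne]
  have h3 := (hT.existsUnique_path w pw).unique h1 h2
  simpa using congrArg SimpleGraph.Walk.snd h3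

lemma xor_mem_descSet_iff {V : Type*} {T : SimpleGraph V} (hT : T.IsTree)
    {s w pw c d : V} (hadj : T.Adj w pw) (hlow : w ∈ descSet T s pw) (hcd : T.Adj c d) :
    Xor (c ∈ descSet T s w) (d ∈ descSet T s w) ↔ (c = w ∧ d = pw) ∨ (c = pw ∧ d = w) := by
  have hw : w ∈ descSet T s w := fun p _ => p.start_mem_support
  have hpw : pw ∉ descSet T s w := fun h => hadj.ne (descSet_antisymm hT hlow h)
  constructor
  · rintro (⟨h1, h2⟩ | ⟨h1, h2⟩)
    · exact Or.inl (eq_of_mem_of_notMem_descSet hT hadj hlow hcd h1 h2)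
    · exact Or.inr (eq_of_mem_of_notMem_descSet hT hadj hlow hcd.symm h1 h2).symm
  · rintro (⟨rfl, rfl⟩ | ⟨rfl, rfl⟩)
    · exact Or.inl ⟨hw, hpw⟩
    · exact Or.inr ⟨hw, hpw⟩

/-- If exactly two edges of the spanning tree `T` cross the nonempty set `S`
(with `s ∉ S`), with lower endpoints `u` and `v` respectively, `u ≠ v`, and
`v ∈ u↓`, then `S = u↓ ∖ v↓`. -/
theorem stmt7 {V : Type*} [Fintype V] (T : SimpleGraph V) (hT : T.IsTree) (s : V)
    (S : Set V) (hne : S.Nonempty) (hs : s ∉ S)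
    (u pu v pv : V)
    (hadj1 : T.Adj u pu) (hlow1 : u ∈ descSet T s pu)
    (hadj2 : T.Adj v pv) (hlow2 : v ∈ descSet T s pv)
    (huv : u ≠ v) (hdesc : v ∈ descSet T s u)
    (hcross1 : Xor' (u ∈ S) (pu ∈ S)) (hcross2 : Xor' (v ∈ S) (pv ∈ S))
    (honly : ∀ c d : V, T.Adj c d → Xor' (c ∈ S) (d ∈ S) →
      (c = u ∧ d = pu) ∨ (c = pu ∧ d = u) ∨ (c = v ∧ d = pv) ∨ (c = pv ∧ d = v)) :
    S = descSet T s u \ descSet T s v := by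
  have hsub : ∀ x, x ∈ descSet T s v → x ∈ descSet T s u := fun x => descSet_trans hdesc
  have hdist : ¬ (u = pv ∧ v = pu) := by
    rintro ⟨rfl, rfl⟩
    exact huv (descSet_antisymm hT hlow1 hlow2)
  have hroot : s ∉ descSet T s u \ descSet T s v := by
    rintro ⟨h1, h2⟩
    have hus : u = s := by simpa using h1 .nil .nil
    subst hus
    have hpu : pu = u := by simpa using hlow1 .nil .nil
    exact hadj1.ne hpu.symm
  have hstep : ∀ c d, T.Adj c d → (Xor (c ∈ S) (d ∈ S) ↔
      Xor (c ∈ descSet T s u \ descSet T s v) (d ∈ descSet T s u \ descSet T s v)) := by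
    intro c d hcd
    have hu := xor_mem_descSet_iff hT hadj1 hlow1 hcd
    have hv := xor_mem_descSet_iff hT hadj2 hlow2 hcd
    have hS : Xor (c ∈ S) (d ∈ S) ↔
        ((c = u ∧ d = pu) ∨ (c = pu ∧ d = u)) ∨ ((c = v ∧ d = pv) ∨ (c = pv ∧ d = v)) := by
      constructor
      · exact fun h => or_assoc.2 (honly c d hcd h)
      · rintro ((⟨rfl, rfl⟩ | ⟨rfl, rfl⟩) | (⟨rfl, rfl⟩ | ⟨rfl, rfl⟩))
        exacts [hcross1, hcross1.symm, hcross2, hcross2.symm]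
    have hexcl : ¬ (((c = u ∧ d = pu) ∨ (c = pu ∧ d = u)) ∧
        ((c = v ∧ d = pv) ∨ (c = pv ∧ d = v))) := by
      grind
    rw [← hu, ← hv] at hS hexcl
    have hc := hsub c
    have hd := hsub d
    rw [hS]
    simp only [Set.mem_sdiff, xor_def] at hexcl ⊢
    clear * - hexcl hc hd
    grind
  ext x
  obtain ⟨p⟩ := hT.connected.preconnected x s
  induction p with
  | nil => exact iff_of_false hs hroot
  | cons h p ih =>
    have hx := hstep _ _ h
    have hy := ih hs hlow1 hlow2 hdesc hsub hroot hstep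
    simp only [xor_def] at hx
    clear * - hx hy
    grind
end

section
/- Let T be a spanning tree of a connected graph on a finite vertex set V, rooted at s ∈ V. Let S be a nonempty subset of V with s ∉ S, and suppose exactly two edges of T cross S, with lower endpoints u and v respectively, where v ∉ u↓ and u ∉ v↓. Then S = u↓ ∪ v↓. -/
/-- In a tree, membership in a descendant set is read off any single path to the root. -/
lemma mem_descSet_iff {V : Type*} {T : SimpleGraph V} (hT : T.IsTree) {s v x : V}
    (p : T.Walk x s) (hp : p.IsPath) : x ∈ descSet T s v ↔ v ∈ p.support := by
  refine ⟨fun h => h p hp, fun h q hq => ?_⟩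
  have : q = p := (hT.existsUnique_path x s).unique hq hp
  rwa [this]

/-- The path from `u` to the root starts with the edge to the parent `pu` of `u`. -/
lemma eq_parent {V : Type*} {T : SimpleGraph V} (hT : T.IsTree) {s u pu d : V}
    (hadj : T.Adj u pu) (hlow : u ∈ descSet T s pu) (h : T.Adj u d) (p : T.Walk d s)
    (hp : (SimpleGraph.Walk.cons h p).IsPath) : d = pu := by
  classical
  have hmem := hlow _ hp
  rw [SimpleGraph.Walk.support_cons, List.mem_cons] at hmem
  have hpu : pu ∈ p.support := hmem.resolve_left hadj.ne'
  rw [SimpleGraph.Walk.cons_isPath_iff] at hp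
  -- The edge to `pu` followed by the rest of the path from `pu` is another path from `u` to `s`.
  have hq : (SimpleGraph.Walk.cons hadj (p.dropUntil pu hpu)).IsPath := by
    rw [SimpleGraph.Walk.cons_isPath_iff]
    exact ⟨hp.1.dropUntil hpu, fun hu => hp.2 (p.support_dropUntil_subset_support hpu hu)⟩
  have heq := (hT.existsUnique_path u s).unique
    ((SimpleGraph.Walk.cons_isPath_iff h p).2 hp) hq
  simpa using congrArg SimpleGraph.Walk.snd heq

/-- If exactly two edges of the spanning tree `T` cross the nonempty set `S`
(with `s ∉ S`), with lower endpoints `u` and `v` respectively, where `v ∉ u↓`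
and `u ∉ v↓`, then `S = u↓ ∪ v↓`. -/
theorem stmt8 {V : Type*} [Fintype V] (T : SimpleGraph V) (hT : T.IsTree) (s : V)
    (S : Set V) (hne : S.Nonempty) (hs : s ∉ S)
    (u pu v pv : V)
    (hadj1 : T.Adj u pu) (hlow1 : u ∈ descSet T s pu)
    (hadj2 : T.Adj v pv) (hlow2 : v ∈ descSet T s pv)
    (hnd1 : v ∉ descSet T s u) (hnd2 : u ∉ descSet T s v)
    (hcross1 : Xor' (u ∈ S) (pu ∈ S)) (hcross2 : Xor' (v ∈ S) (pv ∈ S))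
    (honly : ∀ c d : V, T.Adj c d → Xor' (c ∈ S) (d ∈ S) →
      (c = u ∧ d = pu) ∨ (c = pu ∧ d = u) ∨ (c = v ∧ d = pv) ∨ (c = pv ∧ d = v)) :
    S = descSet T s u ∪ descSet T s v := by
  have key : ∀ (x r : V) (p : T.Walk x r), r = s → p.IsPath →
      (x ∈ S ↔ u ∈ p.support ∨ v ∈ p.support) := by
    intro x r p hr
    induction p with
    | nil =>
      subst hr
      intro _
      -- The root is neither `u` nor `v`: otherwise one would be a descendant of the other.
      have h1 : u ≠ _ := fun h => hnd1 fun p _ => h ▸ p.end_mem_support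
      have h2 : v ≠ _ := fun h => hnd2 fun p _ => h ▸ p.end_mem_support
      simp [hs, h1, h2]
    | @cons x d r h p ih =>
      subst hr
      intro hp
      have hp' := (SimpleGraph.Walk.cons_isPath_iff h p).1 hp
      have ih := ih rfl hp'.1
      rw [SimpleGraph.Walk.support_cons, List.mem_cons, List.mem_cons]
      by_cases hxu : x = u
      · subst hxu
        have hd := eq_parent hT hadj1 hlow1 h p hp
        subst hd
        have hv : v ∉ p.support := fun hv =>
          hnd2 ((mem_descSet_iff hT _ hp).2 (List.mem_cons_of_mem _ hv))
        have hx := hp'.2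
        unfold Xor' Xor at hcross1
        tauto
      by_cases hxv : x = v
      · subst hxv
        have hd := eq_parent hT hadj2 hlow2 h p hp
        subst hd
        have hu : u ∉ p.support := fun hu =>
          hnd1 ((mem_descSet_iff hT _ hp).2 (List.mem_cons_of_mem _ hu))
        have hx := hp'.2
        unfold Xor' Xor at hcross2
        tauto
      have hsame : ¬ Xor' (x ∈ S) (d ∈ S) := by
        intro hX
        rcases honly x d h hX with ⟨h1, _⟩ | ⟨h1, h2⟩ | ⟨h1, _⟩ | ⟨h1, h2⟩
        · exact hxu h1
        -- A crossing edge traversed downwards would make the path revisit the parent `x`.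
        · subst h1 h2
          exact hp'.2 (hlow1 p hp'.1)
        · exact hxv h1
        · subst h1 h2
          exact hp'.2 (hlow2 p hp'.1)
      have hxu' : u ≠ x := fun h => hxu h.symm
      have hxv' : v ≠ x := fun h => hxv h.symm
      unfold Xor' Xor at hsame
      tauto
  ext x
  obtain ⟨p, hp, _⟩ := hT.existsUnique_path x s
  rw [Set.mem_union, mem_descSet_iff hT p hp, mem_descSet_iff hT p hp]
  exact key x s p rfl hp
end
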